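/- Let G be a connected finite simple graph on n vertices, β := β(G), r_G := β^{dia(G)}/(2n), and θ_G := (β/(4n))^{dia(G)}. Then for every real θ with θ_G ≤ θ ≤ 2π − θ_G, the independence polynomial I(G,z) has no root in the open disc D(β e^{iθ}, r_G·(β·θ_G)²/4). -/

import Mathlib

open Polynomial

open scoped Classical in
/-- `indPolyOn G A` is the independence polynomial (over `ℝ`) of the subgraph of `G`
induced on the vertex set `A`: the sum of `(-1)^|s| • X^|s|` over all independent
sets `s ⊆ A` of `G`.  Equivalently it is `∑ k (-1)^k a_k z^k` where `a_k` is the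
number of independent sets of size `k` of the induced subgraph `G[A]`. -/
noncomputable def indPolyOn {V : Type*} [Fintype V] (G : SimpleGraph V) (A : Set V) :
    Polynomial ℝ :=
  ∑ s ∈ Finset.univ.filter
      (fun s : Finset V => ↑s ⊆ A ∧ ∀ u ∈ s, ∀ v ∈ s, ¬ G.Adj u v),
    ((-1 : ℝ) ^ s.card) • (X : Polynomial ℝ) ^ s.card

/-- The independence polynomial `I(G,z)` of `G`. -/
noncomputable def indPoly {V : Type*} [Fintype V] (G : SimpleGraph V) : Polynomial ℝ :=
  indPolyOn G Set.univ

/-!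
Let `t` be a parameter at which all induced subgraphs of `G[A]` have positive independence
polynomial. Multiplying out the recursion `I(A) = I(A - v) - z I(A - N[v])` shows that the ratios
`I(B) / I(A)`, `B ⊆ A`, at a complex `z` with `|z| ≤ t` are majorized by their values at `t`:
`|I(B, z) / I(A, z) - 1| ≤ I(B, t) / I(A, t) - 1`.

If `G` is connected, then for every vertex `v` this applies to `G - v` even at some `t = β + δ`
beyond `β`, since walks of length at most `dia(G)` bound the logarithmic derivative of `I(G - v)`
at `β` by `(n - 1) / β ^ (dia(G) + 1)` and `I(G - v)` lies above its tangent at `β`. A root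
`z` of `I(G)` satisfies `z I(G - N[v], z) = I(G - v, z)`, and for `|z| ≤ β + δ` the majorization of
this ratio makes `|z| - Re z` smaller than it is anywhere in the disc, where it is about
`β (1 - cos θ)`.
-/

/-! ### Deletion of a vertex -/

section Deletion

variable {V : Type*} (G : SimpleGraph V) (A : Set V) {v : V}

/-- The closed neighbourhood `N[v]` of a vertex, as it enters the recursion
`I(G) = I(G - v) - z I(G - N[v])`. -/
def closedNeighborSet (v : V) : Set V := insert v (G.neighborSet v)

theorem sdiff_closedNeighborSet_subset (v : V) : A \ closedNeighborSet G v ⊆ A \ {v} :=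
  Set.sdiff_subset_sdiff_right (Set.singleton_subset_iff.2 (Set.mem_insert v _))

variable {A} in
theorem sdiff_closedNeighborSet_ssubset (hv : v ∈ A) : A \ closedNeighborSet G v ⊂ A :=
  (sdiff_closedNeighborSet_subset G A v).trans_ssubset (Set.sdiff_singleton_ssubset.2 hv)

variable [Fintype V]

open scoped Classical in
/-- The independent sets of `G` contained in `A`: the index set of the sum `indPolyOn G A`. -/
noncomputable def indSets : Finset (Finset V) :=
  Finset.univ.filter (fun s : Finset V => ↑s ⊆ A ∧ ∀ u ∈ s, ∀ v ∈ s, ¬ G.Adj u v)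

variable {G A} in
theorem mem_indSets {s : Finset V} :
    s ∈ indSets G A ↔ ↑s ⊆ A ∧ ∀ u ∈ s, ∀ v ∈ s, ¬ G.Adj u v := by
  simp [indSets]

theorem indPolyOn_eq_sum :
    indPolyOn G A = ∑ s ∈ indSets G A, ((-1 : ℝ) ^ s.card) • (X : ℝ[X]) ^ s.card :=
  rfl

theorem indPolyOn_empty : indPolyOn G ∅ = 1 := by
  have indSets_empty : indSets G ∅ = {∅} := by
    ext s
    simp +contextual [mem_indSets, Set.subset_empty_iff]
  simp [indPolyOn_eq_sum, indSets_empty]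

open scoped Classical in
theorem filter_notMem_indSets (v : V) : {s ∈ indSets G A | v ∉ s} = indSets G (A \ {v}) := by
  ext s
  simp only [Finset.mem_filter, mem_indSets, Set.subset_sdiff, Set.disjoint_singleton_right,
    Finset.mem_coe]
  tauto

variable {G A} in
theorem notMem_of_mem_indSets_sdiff {s : Finset V}
    (hs : s ∈ indSets G (A \ closedNeighborSet G v)) : v ∉ s :=
  fun h => ((mem_indSets.1 hs).1 h).2 (Set.mem_insert v _)

open scoped Classical in
variable {A} in
theorem sum_filter_mem_indSets {M : Type*} [AddCommMonoid M] (hv : v ∈ A) (f : Finset V → M) :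
    ∑ s ∈ indSets G A with v ∈ s, f s =
      ∑ s ∈ indSets G (A \ closedNeighborSet G v), f (insert v s) := by
  symm
  refine Finset.sum_bij' (fun s _ => insert v s) (fun s _ => s.erase v) ?_ ?_
    (fun s hs => Finset.erase_insert (notMem_of_mem_indSets_sdiff hs))
    (fun s hs => Finset.insert_erase (Finset.mem_filter.1 hs).2) (fun _ _ => rfl)
  · intro s hs
    obtain ⟨hsA, hind⟩ := mem_indSets.1 hs
    simp only [Finset.mem_filter, mem_indSets, Finset.coe_insert, Set.insert_subset_iff,
      Finset.forall_mem_insert, Finset.mem_insert_self, and_true]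
    exact ⟨⟨hv, fun w hw => (hsA hw).1⟩, ⟨G.irrefl, fun w hw h => (hsA hw).2 (Or.inr h)⟩,
      fun w hw => ⟨fun h => (hsA hw).2 (Or.inr h.symm), hind w hw⟩⟩
  · intro s hs
    obtain ⟨hs, hvs⟩ := Finset.mem_filter.1 hs
    obtain ⟨hsA, hind⟩ := mem_indSets.1 hs
    refine mem_indSets.2 ⟨fun w hw => ?_, fun a ha b hb =>
      hind a (Finset.mem_of_mem_erase ha) b (Finset.mem_of_mem_erase hb)⟩
    obtain ⟨hwv, hws⟩ := Finset.mem_erase.1 hw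
    exact ⟨hsA hws, not_or.2 ⟨hwv, hind v hvs w hws⟩⟩

variable {A} in
theorem indPolyOn_eq_sub (hv : v ∈ A) :
    indPolyOn G A = indPolyOn G (A \ {v}) - X * indPolyOn G (A \ closedNeighborSet G v) := by
  classical
  rw [indPolyOn_eq_sum, ← Finset.sum_filter_not_add_sum_filter _ (fun s : Finset V => v ∈ s),
    filter_notMem_indSets, sum_filter_mem_indSets G hv, ← indPolyOn_eq_sum, sub_eq_add_neg,
    add_right_inj, indPolyOn_eq_sum, Finset.mul_sum, ← Finset.sum_neg_distrib]
  refine Finset.sum_congr rfl fun s hs => ?_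
  rw [Finset.card_insert_of_notMem (notMem_of_mem_indSets_sdiff hs), pow_succ, pow_succ',
    mul_neg_one, neg_smul, mul_smul_comm]

variable {A} in
theorem aeval_indPolyOn_eq_sub {S : Type*} [CommRing S] [Algebra ℝ S] (hv : v ∈ A) (z : S) :
    aeval z (indPolyOn G A) = aeval z (indPolyOn G (A \ {v})) -
      z * aeval z (indPolyOn G (A \ closedNeighborSet G v)) := by
  simp [indPolyOn_eq_sub G hv]

variable {A} in
theorem eval_indPolyOn_eq_sub (hv : v ∈ A) (t : ℝ) :
    (indPolyOn G A).eval t = (indPolyOn G (A \ {v})).eval t -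
      t * (indPolyOn G (A \ closedNeighborSet G v)).eval t := by
  simp [indPolyOn_eq_sub G hv]

theorem derivative_indPolyOn [DecidablePred (· ∈ A)] :
    derivative (indPolyOn G A) = -∑ u with u ∈ A, indPolyOn G (A \ closedNeighborSet G u) := by
  classical
  have term (s : Finset V) : derivative (((-1 : ℝ) ^ s.card) • (X : ℝ[X]) ^ s.card) =
      ∑ _u ∈ s, ((-1 : ℝ) ^ s.card) • X ^ (s.card - 1) := by
    rw [derivative_smul, derivative_X_pow, Finset.sum_const, nsmul_eq_mul, map_natCast,
      mul_smul_comm]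
  have swap : ∀ (s : Finset V) (u : V), s ∈ indSets G A ∧ u ∈ s ↔
      s ∈ {s ∈ indSets G A | u ∈ s} ∧ u ∈ Finset.univ.filter (· ∈ A) := by
    simp only [Finset.mem_filter, Finset.mem_univ, true_and, iff_self_and]
    exact fun s u h => (mem_indSets.1 h.1).1 h.2
  rw [indPolyOn_eq_sum, derivative_sum, Finset.sum_congr rfl fun s _ => term s,
    Finset.sum_comm' swap, ← Finset.sum_neg_distrib]
  refine Finset.sum_congr rfl fun u hu => ?_
  rw [sum_filter_mem_indSets G (Finset.mem_filter.1 hu).2, indPolyOn_eq_sum,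
    ← Finset.sum_neg_distrib]
  refine Finset.sum_congr rfl fun s hs => ?_
  rw [Finset.card_insert_of_notMem (notMem_of_mem_indSets_sdiff hs), pow_succ, mul_neg_one,
    neg_smul, Nat.add_sub_cancel]

theorem one_le_eval_indPolyOn_of_nonpos {t : ℝ} (ht : t ≤ 0) : 1 ≤ (indPolyOn G A).eval t := by
  induction A using WellFoundedLT.induction with
  | ind A ih =>
  rcases A.eq_empty_or_nonempty with rfl | ⟨v, hv⟩
  · simp [indPolyOn_empty]
  · rw [eval_indPolyOn_eq_sub G hv]
    have deleted := ih _ (Set.sdiff_singleton_ssubset.2 hv)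
    have removed := ih _ (sdiff_closedNeighborSet_ssubset G hv)
    nlinarith

end Deletion

/-! ### Majorization -/

section NormInequalities

theorem norm_mul_sub_one_le {R : Type*} [NormedRing R] {x y : R} {a b : ℝ}
    (hx : ‖x - 1‖ ≤ a - 1) (hy : ‖y - 1‖ ≤ b - 1) : ‖x * y - 1‖ ≤ a * b - 1 :=
  calc ‖x * y - 1‖ = ‖(x - 1) * (y - 1) + (x - 1) + (y - 1)‖ := by congr 1; noncomm_ring
    _ ≤ ‖(x - 1) * (y - 1)‖ + ‖x - 1‖ + ‖y - 1‖ := norm_add₃_le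
    _ ≤ ‖x - 1‖ * ‖y - 1‖ + ‖x - 1‖ + ‖y - 1‖ := by gcongr; exact norm_mul_le _ _
    _ ≤ (a - 1) * (b - 1) + (a - 1) + (b - 1) := by
        have := (norm_nonneg _).trans hx
        gcongr
    _ = a * b - 1 := by ring

variable {𝕜 : Type*} [NormedField 𝕜]

theorem one_sub_ne_zero_of_norm_le {w : 𝕜} {s : ℝ} (hw : ‖w‖ ≤ s) (hs : s < 1) : 1 - w ≠ 0 := by
  rw [sub_ne_zero]
  rintro rfl
  exact (hw.trans_lt hs).ne norm_one

theorem norm_inv_one_sub_sub_one_le {w : 𝕜} {s : ℝ} (hw : ‖w‖ ≤ s) (hs : s < 1) :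
    ‖(1 - w)⁻¹ - 1‖ ≤ (1 - s)⁻¹ - 1 := by
  have lower : 1 - s ≤ ‖1 - w‖ := by
    have := norm_sub_norm_le 1 w
    rw [norm_one] at this
    linarith
  have hs' : 1 - s ≠ 0 := (sub_pos.2 hs).ne'
  have hw' := one_sub_ne_zero_of_norm_le hw hs
  calc ‖(1 - w)⁻¹ - 1‖ = ‖w‖ / ‖1 - w‖ := by rw [← norm_div]; congr 1; field_simp; ring
    _ ≤ s / (1 - s) := by
        have := (norm_nonneg w).trans hw
        have := sub_pos.2 hs
        gcongr
    _ = (1 - s)⁻¹ - 1 := by field_simp; ring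

end NormInequalities

section ShearerRegion

variable {V : Type*} [Fintype V] {G : SimpleGraph V} {A : Set V}

variable (G A) in
/-- The univariate Shearer region of the induced subgraph `G[A]`: the parameters `t` at which the
independence polynomials of all its induced subgraphs are positive. -/
def shearerRegion : Set ℝ := {t | ∀ C ⊆ A, 0 < (indPolyOn G C).eval t}

theorem shearerRegion_anti {B : Set V} (h : A ⊆ B) : shearerRegion G B ⊆ shearerRegion G A :=
  fun _ ht C hC => ht C (hC.trans h)

variable {𝕜 : Type*} [NormedField 𝕜] [NormedAlgebra ℝ 𝕜]

theorem aeval_ne_zero_and_norm_div_sub_one_le_of_sdiff_singleton {t : ℝ}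
    (ht : t ∈ shearerRegion G A) {z : 𝕜} (hz : ‖z‖ ≤ t) {u : V} (hu : u ∈ A)
    (h0 : aeval z (indPolyOn G (A \ {u})) ≠ 0)
    (h : ‖aeval z (indPolyOn G (A \ closedNeighborSet G u)) /
          aeval z (indPolyOn G (A \ {u})) - 1‖ ≤
        (indPolyOn G (A \ closedNeighborSet G u)).eval t / (indPolyOn G (A \ {u})).eval t - 1) :
    aeval z (indPolyOn G A) ≠ 0 ∧
      ‖aeval z (indPolyOn G (A \ {u})) / aeval z (indPolyOn G A) - 1‖ ≤
        (indPolyOn G (A \ {u})).eval t / (indPolyOn G A).eval t - 1 := by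
  have posA := ht A subset_rfl
  have pos_deleted := ht (A \ {u}) Set.sdiff_subset
  have recz := aeval_indPolyOn_eq_sub G hu z
  have rect := eval_indPolyOn_eq_sub G hu t
  set x := aeval z (indPolyOn G (A \ {u}))
  set y := (indPolyOn G (A \ {u})).eval t
  set g := aeval z (indPolyOn G (A \ closedNeighborSet G u)) / x with hg
  set m := (indPolyOn G (A \ closedNeighborSet G u)).eval t / y with hm
  have eqz : aeval z (indPolyOn G A) = x * (1 - z * g) := by rw [recz, hg]; field_simp
  have eqt : (indPolyOn G A).eval t = y * (1 - t * m) := by rw [rect, hm]; field_simp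
  have norm_g : ‖g‖ ≤ m := by
    have := norm_sub_norm_le g 1
    rw [norm_one] at this
    linarith
  have norm_zg : ‖z * g‖ ≤ t * m := by
    rw [norm_mul]
    exact mul_le_mul hz norm_g (norm_nonneg g) ((norm_nonneg z).trans hz)
  have lt_one : t * m < 1 := by
    rw [eqt] at posA
    exact sub_pos.1 ((pos_iff_pos_of_mul_pos posA).1 pos_deleted)
  rw [eqz, eqt, div_mul_cancel_left₀ h0, div_mul_cancel_left₀ pos_deleted.ne']
  exact ⟨mul_ne_zero h0 (one_sub_ne_zero_of_norm_le norm_zg lt_one),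
    norm_inv_one_sub_sub_one_le norm_zg lt_one⟩

theorem aeval_ne_zero_and_norm_div_sub_one_le {t : ℝ} (ht : t ∈ shearerRegion G A) {z : 𝕜}
    (hz : ‖z‖ ≤ t) :
    aeval z (indPolyOn G A) ≠ 0 ∧ ∀ B ⊆ A,
      ‖aeval z (indPolyOn G B) / aeval z (indPolyOn G A) - 1‖ ≤
        (indPolyOn G B).eval t / (indPolyOn G A).eval t - 1 := by
  induction A using WellFoundedLT.induction with
  | ind A ih =>
  have deleted {u : V} (hu : u ∈ A) :=
    ih (A \ {u}) (Set.sdiff_singleton_ssubset.2 hu) (shearerRegion_anti Set.sdiff_subset ht)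
  have step {u : V} (hu : u ∈ A) :=
    aeval_ne_zero_and_norm_div_sub_one_le_of_sdiff_singleton ht hz hu (deleted hu).1
      ((deleted hu).2 _ (sdiff_closedNeighborSet_subset G A u))
  have hA : aeval z (indPolyOn G A) ≠ 0 := by
    rcases A.eq_empty_or_nonempty with rfl | ⟨u, hu⟩
    · simp [indPolyOn_empty]
    · exact (step hu).1
  refine ⟨hA, fun B hBA => ?_⟩
  rcases hBA.eq_or_ssubset with rfl | hlt
  · simp [hA, (ht B subset_rfl).ne']
  · obtain ⟨u, hu, huB⟩ := Set.exists_of_ssubset hlt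
    have := norm_mul_sub_one_le ((deleted hu).2 B (Set.subset_sdiff_singleton hBA huB)) (step hu).2
    rwa [div_mul_div_cancel₀ (deleted hu).1,
      div_mul_div_cancel₀ (ht _ Set.sdiff_subset).ne'] at this

theorem isOpen_shearerRegion : IsOpen (shearerRegion G A) := by
  simp only [shearerRegion, Set.ofPred_forall]
  exact isOpen_iInter_of_finite fun C => isOpen_iInter_of_finite fun _ =>
    isOpen_lt continuous_const (indPolyOn G C).continuous

theorem mem_shearerRegion_of_nonpos {t : ℝ} (ht : t ≤ 0) : t ∈ shearerRegion G A :=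
  fun C _ => zero_lt_one.trans_le (one_le_eval_indPolyOn_of_nonpos G C ht)

theorem eval_indPolyOn_nonneg {C : Set V} {t : ℝ} (ht : t ∈ closure (shearerRegion G A))
    (hC : C ⊆ A) : 0 ≤ (indPolyOn G C).eval t :=
  closure_minimal (fun _ hs => (hs C hC).le)
    (isClosed_le continuous_const (indPolyOn G C).continuous) ht

theorem mul_eval_sdiff_closedNeighborSet_le {v : V} {t : ℝ}
    (ht : t ∈ closure (shearerRegion G A)) (hv : v ∈ A) :
    t * (indPolyOn G (A \ closedNeighborSet G v)).eval t ≤ (indPolyOn G (A \ {v})).eval t := by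
  have := eval_indPolyOn_nonneg ht subset_rfl
  rwa [eval_indPolyOn_eq_sub G hv, sub_nonneg] at this

theorem eval_indPolyOn_le_of_subset {C : Set V} {t : ℝ} (h0 : 0 ≤ t)
    (ht : t ∈ closure (shearerRegion G A)) (hCA : C ⊆ A) :
    (indPolyOn G A).eval t ≤ (indPolyOn G C).eval t := by
  induction A using WellFoundedLT.induction with
  | ind A ih =>
  rcases hCA.eq_or_ssubset with rfl | hlt
  · exact le_rfl
  obtain ⟨u, hu, huC⟩ := Set.exists_of_ssubset hlt
  calc (indPolyOn G A).eval t ≤ (indPolyOn G (A \ {u})).eval t := by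
        rw [eval_indPolyOn_eq_sub G hu]
        exact sub_le_self _ (mul_nonneg h0 (eval_indPolyOn_nonneg ht Set.sdiff_subset))
    _ ≤ (indPolyOn G C).eval t := ih _ (Set.sdiff_singleton_ssubset.2 hu)
        (closure_mono (shearerRegion_anti Set.sdiff_subset) ht)
        (Set.subset_sdiff_singleton hCA huC)

theorem mem_shearerRegion_of_mem_closure {t : ℝ} (ht : t ∈ closure (shearerRegion G A))
    (hA : (indPolyOn G A).eval t ≠ 0) : t ∈ shearerRegion G A := by
  rcases le_total t 0 with h0 | h0
  · exact mem_shearerRegion_of_nonpos h0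
  · exact fun C hC => ((eval_indPolyOn_nonneg ht subset_rfl).lt_of_ne' hA).trans_le
      (eval_indPolyOn_le_of_subset h0 ht hC)

theorem subset_shearerRegion_of_isPreconnected {s : Set ℝ} (hs : IsPreconnected s)
    (hne : (s ∩ shearerRegion G A).Nonempty)
    (h : ∀ t ∈ s, t ∈ closure (shearerRegion G A) → (indPolyOn G A).eval t ≠ 0) :
    s ⊆ shearerRegion G A :=
  hs.subset_of_closure_inter_subset isOpen_shearerRegion hne
    fun t ht => mem_shearerRegion_of_mem_closure ht.1 (h t ht.2 ht.1)

variable (G A) in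
theorem isLowerSet_shearerRegion : IsLowerSet (shearerRegion G A) := by
  intro t s hst ht
  rcases le_total s 0 with h0 | h0
  · exact mem_shearerRegion_of_nonpos h0
  refine subset_shearerRegion_of_isPreconnected isPreconnected_Icc
    ⟨0, ⟨le_rfl, h0.trans hst⟩, mem_shearerRegion_of_nonpos le_rfl⟩ (fun r hr _ => ?_) ⟨h0, hst⟩
  have norm_r : ‖r‖ ≤ t := by rw [Real.norm_of_nonneg hr.1]; exact hr.2
  simpa using (aeval_ne_zero_and_norm_div_sub_one_le ht norm_r).1

theorem Iio_subset_shearerRegion {t : ℝ} (ht : t ∈ closure (shearerRegion G A)) :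
    Set.Iio t ⊆ shearerRegion G A := by
  intro s hs
  obtain ⟨r, hsr, hr⟩ := mem_closure_iff.1 ht (Set.Ioi s) isOpen_Ioi hs
  exact isLowerSet_shearerRegion G A (le_of_lt hsr) hr

theorem mem_closure_shearerRegion_of_forall_root_le {β : ℝ}
    (hβ : ∀ x, (indPolyOn G A).eval x = 0 → β ≤ x) : β ∈ closure (shearerRegion G A) := by
  have below : Set.Iio β ⊆ shearerRegion G A :=
    subset_shearerRegion_of_isPreconnected isPreconnected_Iio
      ⟨min 0 (β - 1), by simp, mem_shearerRegion_of_nonpos (min_le_left _ _)⟩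
      fun t ht _ h => (hβ t h).not_gt ht
  exact closure_mono below (by simp)

theorem le_one_of_mem_closure_shearerRegion (hA : A.Nonempty) {t : ℝ}
    (ht : t ∈ closure (shearerRegion G A)) : t ≤ 1 := by
  obtain ⟨v, hv⟩ := hA
  have empty : ({v} : Set V) \ closedNeighborSet G v = ∅ :=
    Set.sdiff_eq_empty.2 (Set.singleton_subset_iff.2 (Set.mem_insert v _))
  simpa [empty, indPolyOn_empty] using mul_eval_sdiff_closedNeighborSet_le
    (closure_mono (shearerRegion_anti (Set.singleton_subset_iff.2 hv)) ht) (Set.mem_singleton v)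

theorem root_mem_Ioc (hA : A.Nonempty) {β : ℝ} (hroot : (indPolyOn G A).eval β = 0)
    (hmin : ∀ x, (indPolyOn G A).eval x = 0 → β ≤ x) : β ∈ Set.Ioc 0 1 := by
  refine ⟨lt_of_not_ge fun hβ => ?_,
    le_one_of_mem_closure_shearerRegion hA (mem_closure_shearerRegion_of_forall_root_le hmin)⟩
  have := one_le_eval_indPolyOn_of_nonpos G A hβ
  linarith

/-! ### Convexity and the tangent line -/

theorem antitoneOn_eval_indPolyOn {C : Set V} {t : ℝ} (ht : t ∈ closure (shearerRegion G A))
    (hC : C ⊆ A) : AntitoneOn (fun s => (indPolyOn G C).eval s) (Set.Iic t) := by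
  classical
  refine antitoneOn_of_deriv_nonpos (convex_Iic t) (indPolyOn G C).continuousOn
    (indPolyOn G C).differentiableOn fun s hs => ?_
  rw [interior_Iic] at hs
  rw [Polynomial.deriv, derivative_indPolyOn, eval_neg, eval_finsetSum, neg_nonpos]
  exact Finset.sum_nonneg fun u _ =>
    (Iio_subset_shearerRegion ht hs _ (Set.sdiff_subset.trans hC)).le

theorem tangent_le_eval_indPolyOn {a t : ℝ} (ht : t ∈ closure (shearerRegion G A)) (hat : a ≤ t) :
    (indPolyOn G A).eval a + (t - a) * (derivative (indPolyOn G A)).eval a ≤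
      (indPolyOn G A).eval t := by
  classical
  have le_deriv : ∀ s ∈ interior (Set.Icc a t),
      (derivative (indPolyOn G A)).eval a ≤ deriv (fun s => (indPolyOn G A).eval s) s := by
    intro s hs
    rw [interior_Icc] at hs
    rw [Polynomial.deriv, derivative_indPolyOn, eval_neg, eval_neg, eval_finsetSum,
      eval_finsetSum, neg_le_neg_iff]
    exact Finset.sum_le_sum fun u _ =>
      antitoneOn_eval_indPolyOn ht Set.sdiff_subset hat hs.2.le hs.1.le
  have := (convex_Icc a t).mul_sub_le_image_sub_of_le_deriv (indPolyOn G A).continuousOn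
    (indPolyOn G A).differentiableOn le_deriv a ⟨le_rfl, hat⟩ t ⟨hat, le_rfl⟩ hat
  linarith

theorem mem_shearerRegion_of_tangent_pos {a b : ℝ} (ha : a ∈ shearerRegion G A) (hab : a ≤ b)
    (h : 0 < (indPolyOn G A).eval a + (b - a) * (derivative (indPolyOn G A)).eval a) :
    b ∈ shearerRegion G A := by
  refine subset_shearerRegion_of_isPreconnected isPreconnected_Icc
    ⟨a, ⟨le_rfl, hab⟩, ha⟩ (fun t ht htcl => ?_) ⟨hab, le_rfl⟩
  have tangent := tangent_le_eval_indPolyOn htcl ht.1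
  have posA := ha A subset_rfl
  have : 0 < (indPolyOn G A).eval a + (t - a) * (derivative (indPolyOn G A)).eval a := by
    rcases le_total 0 ((derivative (indPolyOn G A)).eval a) with hd | hd
    · exact add_pos_of_pos_of_nonneg posA (mul_nonneg (sub_nonneg.2 ht.1) hd)
    · nlinarith [ht.2]
  linarith

end ShearerRegion

/-! ### Connected graphs -/

theorem one_add_div_one_sub_le_inv_one_sub {x η ε : ℝ} (hx : 0 ≤ x) (hη : 0 ≤ η) (hε : ε < 1)
    (h : η + x ≤ ε) : (1 + x) / (1 - η) ≤ (1 - ε)⁻¹ := by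
  rw [div_le_iff₀ (by linarith), inv_mul_eq_div, le_div_iff₀ (by linarith)]
  nlinarith [mul_nonneg hx hη]

section Connected

variable {V : Type*} {G : SimpleGraph V}

theorem exists_adj_notMem_of_ne_univ (hG : G.Preconnected) {A : Set V} (hne : A.Nonempty)
    (hA : A ≠ Set.univ) : ∃ w ∈ A, ∃ u ∉ A, G.Adj w u := by
  obtain ⟨a, ha⟩ := hne
  obtain ⟨b, hb⟩ := (Set.ne_univ_iff_exists_notMem A).1 hA
  obtain ⟨p⟩ := hG a b
  obtain ⟨d, -, hd⟩ := p.exists_boundary_dart A ha hb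
  exact ⟨d.fst, hd.1, d.snd, hd.2, d.adj⟩

variable [Fintype V] {t : ℝ}

/-- A minimal counterexample `A` would have a neighbour `u`, and then
`I(A ∪ {u}) = I(A) - t I(A \ N[u])` would be negative at `t`. -/
theorem eval_indPolyOn_pos_of_ne_univ (hG : G.Preconnected) (h0 : 0 < t)
    (ht : t ∈ closure (shearerRegion G Set.univ)) {A : Set V} (hA : A ≠ Set.univ) :
    0 < (indPolyOn G A).eval t := by
  induction A using WellFoundedLT.induction with
  | ind A ih =>
  rcases A.eq_empty_or_nonempty with rfl | hne
  · simp [indPolyOn_empty]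
  obtain ⟨w, hw, u, hu, hadj⟩ := exists_adj_notMem_of_ne_univ hG hne hA
  have delete_u : insert u A \ {u} = A := by simp [hu]
  have hsub : insert u A \ closedNeighborSet G u ⊆ A :=
    (sdiff_closedNeighborSet_subset G _ u).trans delete_u.subset
  have hw' : w ∉ insert u A \ closedNeighborSet G u := fun h => h.2 (Or.inr hadj.symm)
  have removed_pos := ih _ (hsub.ssubset_of_mem_notMem hw hw')
    fun h => hw' (h.symm ▸ Set.mem_univ w)
  have := mul_eval_sdiff_closedNeighborSet_le
    (closure_mono (shearerRegion_anti (Set.subset_univ _)) ht) (Set.mem_insert u A)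
  rw [delete_u] at this
  exact (mul_pos h0 removed_pos).trans_le this

theorem mem_shearerRegion_of_ne_univ (hG : G.Preconnected) (h0 : 0 < t)
    (ht : t ∈ closure (shearerRegion G Set.univ)) {A : Set V} (hA : A ≠ Set.univ) :
    t ∈ shearerRegion G A :=
  fun _ hC => eval_indPolyOn_pos_of_ne_univ hG h0 ht fun h => hA (Set.univ_subset_iff.1 (h ▸ hC))

theorem mul_eval_le_eval_sdiff_singleton (h0 : 0 ≤ t) {A C : Set V}
    (ht : t ∈ closure (shearerRegion G A)) {w : V} (hw : w ∈ A) (hCA : C ⊆ A)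
    (hC : A \ closedNeighborSet G w ⊆ C) :
    t * (indPolyOn G C).eval t ≤ (indPolyOn G (A \ {w})).eval t :=
  (mul_le_mul_of_nonneg_left
    (eval_indPolyOn_le_of_subset h0 (closure_mono (shearerRegion_anti hCA) ht) hC) h0).trans
    (mul_eval_sdiff_closedNeighborSet_le ht hw)

theorem pow_length_mul_eval_le (h0 : 0 ≤ t) (ht : t ∈ closure (shearerRegion G Set.univ))
    {u v : V} (p : G.Walk u v) :
    t ^ p.length * (indPolyOn G ((Set.univ \ {v}) \ {u})).eval t ≤
      (indPolyOn G (Set.univ \ {v})).eval t := by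
  have h1 : t ≤ 1 := le_one_of_mem_closure_shearerRegion ⟨u, Set.mem_univ u⟩ ht
  have nonneg (C : Set V) := eval_indPolyOn_nonneg ht (Set.subset_univ C)
  induction p with
  | nil => simp
  | @cons u w v huw p ih =>
    have hNw : Set.univ \ closedNeighborSet G w ⊆ Set.univ \ {u} := fun x hx =>
      ⟨hx.1, fun hxu => hx.2 (Or.inr (by rw [Set.mem_singleton_iff.1 hxu]; exact huw.symm))⟩
    rw [SimpleGraph.Walk.length_cons]
    by_cases hwv : w = v
    · subst hwv
      calc t ^ (p.length + 1) * (indPolyOn G ((Set.univ \ {w}) \ {u})).eval t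
          ≤ t * (indPolyOn G ((Set.univ \ {w}) \ {u})).eval t :=
            mul_le_mul_of_nonneg_right (pow_le_of_le_one h0 h1 p.length.succ_ne_zero) (nonneg _)
        _ ≤ (indPolyOn G (Set.univ \ {w})).eval t :=
            mul_eval_le_eval_sdiff_singleton h0 ht (Set.mem_univ w) (Set.subset_univ _)
              fun x hx => ⟨sdiff_closedNeighborSet_subset G _ w hx, (hNw hx).2⟩
    · have step : t * (indPolyOn G ((Set.univ \ {v}) \ {u})).eval t ≤
          (indPolyOn G ((Set.univ \ {v}) \ {w})).eval t :=
        mul_eval_le_eval_sdiff_singleton h0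
          (closure_mono (shearerRegion_anti (Set.subset_univ _)) ht) ⟨Set.mem_univ w, hwv⟩
          Set.sdiff_subset fun x hx => ⟨hx.1, (hNw ⟨Set.mem_univ x, hx.2⟩).2⟩
      calc t ^ (p.length + 1) * (indPolyOn G ((Set.univ \ {v}) \ {u})).eval t
          = t ^ p.length * (t * (indPolyOn G ((Set.univ \ {v}) \ {u})).eval t) := by ring
        _ ≤ t ^ p.length * (indPolyOn G ((Set.univ \ {v}) \ {w})).eval t := by gcongr
        _ ≤ (indPolyOn G (Set.univ \ {v})).eval t := ih

theorem pow_diam_succ_mul_eval_le (hG : G.Connected) (h0 : 0 ≤ t)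
    (ht : t ∈ closure (shearerRegion G Set.univ)) {u v : V} (huv : u ≠ v) :
    t ^ (G.diam + 1) * (indPolyOn G ((Set.univ \ {v}) \ closedNeighborSet G u)).eval t ≤
      (indPolyOn G (Set.univ \ {v})).eval t := by
  have : Nonempty V := ⟨u⟩
  have h1 : t ≤ 1 := le_one_of_mem_closure_shearerRegion Set.univ_nonempty ht
  obtain ⟨p, hp⟩ := hG.exists_walk_length_eq_dist u v
  have length_le : p.length ≤ G.diam :=
    hp ▸ SimpleGraph.dist_le_diam (SimpleGraph.connected_iff_ediam_ne_top.1 hG)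
  have ht' := closure_mono (shearerRegion_anti (Set.subset_univ (Set.univ \ {v}))) ht
  calc t ^ (G.diam + 1) * (indPolyOn G ((Set.univ \ {v}) \ closedNeighborSet G u)).eval t
      = t ^ G.diam * (t * (indPolyOn G ((Set.univ \ {v}) \ closedNeighborSet G u)).eval t) := by
        ring
    _ ≤ t ^ G.diam * (indPolyOn G ((Set.univ \ {v}) \ {u})).eval t := by
        gcongr
        exact mul_eval_sdiff_closedNeighborSet_le ht' ⟨Set.mem_univ u, huv⟩
    _ ≤ t ^ p.length * (indPolyOn G ((Set.univ \ {v}) \ {u})).eval t :=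
        mul_le_mul_of_nonneg_right (pow_le_pow_of_le_one h0 h1 length_le)
          (eval_indPolyOn_nonneg ht' Set.sdiff_subset)
    _ ≤ (indPolyOn G (Set.univ \ {v})).eval t := pow_length_mul_eval_le h0 ht p

theorem neg_pow_diam_succ_mul_derivative_le (hG : G.Connected) (h0 : 0 ≤ t)
    (ht : t ∈ closure (shearerRegion G Set.univ)) (v : V) :
    -(t ^ (G.diam + 1) * (derivative (indPolyOn G (Set.univ \ {v}))).eval t) ≤
      (Fintype.card V - 1) * (indPolyOn G (Set.univ \ {v})).eval t := by
  classical
  have : Nonempty V := ⟨v⟩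
  have vertices : Finset.univ.filter (· ∈ Set.univ \ {v}) = Finset.univ.erase v := by
    ext u
    simp
  calc -(t ^ (G.diam + 1) * (derivative (indPolyOn G (Set.univ \ {v}))).eval t)
      = ∑ u ∈ Finset.univ.erase v, t ^ (G.diam + 1) *
          (indPolyOn G ((Set.univ \ {v}) \ closedNeighborSet G u)).eval t := by
        rw [derivative_indPolyOn, vertices, eval_neg, eval_finsetSum, ← Finset.mul_sum, mul_neg,
          neg_neg]
    _ ≤ ∑ _u ∈ Finset.univ.erase v, (indPolyOn G (Set.univ \ {v})).eval t :=
        Finset.sum_le_sum fun u hu => pow_diam_succ_mul_eval_le hG h0 ht (Finset.ne_of_mem_erase hu)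
    _ = (Fintype.card V - 1) * (indPolyOn G (Set.univ \ {v})).eval t := by
        rw [Finset.sum_const, Finset.card_erase_of_mem (Finset.mem_univ v), Finset.card_univ,
          nsmul_eq_mul, Nat.cast_pred Fintype.card_pos]

theorem one_sub_mul_eval_le_tangent (hG : G.Connected) (h0 : 0 < t)
    (ht : t ∈ closure (shearerRegion G Set.univ)) (v : V) {δ η : ℝ} (hδ : 0 ≤ δ)
    (h : (Fintype.card V - 1) * δ ≤ η * t ^ (G.diam + 1)) :
    (1 - η) * (indPolyOn G (Set.univ \ {v})).eval t ≤
      (indPolyOn G (Set.univ \ {v})).eval t +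
        δ * (derivative (indPolyOn G (Set.univ \ {v}))).eval t := by
  have log_deriv := neg_pow_diam_succ_mul_derivative_le hG h0.le ht v
  have f_nonneg := eval_indPolyOn_nonneg ht (Set.subset_univ (Set.univ \ {v}))
  set f := (indPolyOn G (Set.univ \ {v})).eval t
  set f' := (derivative (indPolyOn G (Set.univ \ {v}))).eval t
  have : t ^ (G.diam + 1) * -(δ * f') ≤ t ^ (G.diam + 1) * (η * f) :=
    calc t ^ (G.diam + 1) * -(δ * f') = δ * -(t ^ (G.diam + 1) * f') := by ring
      _ ≤ δ * ((Fintype.card V - 1) * f) := by gcongr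
      _ = (Fintype.card V - 1) * δ * f := by ring
      _ ≤ η * t ^ (G.diam + 1) * f := by gcongr
      _ = t ^ (G.diam + 1) * (η * f) := by ring
  linarith [le_of_mul_le_mul_left this (pow_pos h0 _)]

theorem add_mem_shearerRegion_sdiff_singleton (hG : G.Connected) (h0 : 0 < t)
    (ht : t ∈ closure (shearerRegion G Set.univ)) (v : V) {δ η : ℝ} (hδ : 0 ≤ δ) (hη : η < 1)
    (h : (Fintype.card V - 1) * δ ≤ η * t ^ (G.diam + 1)) :
    t + δ ∈ shearerRegion G (Set.univ \ {v}) := by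
  have htv : t ∈ shearerRegion G (Set.univ \ {v}) :=
    mem_shearerRegion_of_ne_univ hG.preconnected h0 ht
      ((Set.ne_univ_iff_exists_notMem _).2 ⟨v, fun hv => hv.2 rfl⟩)
  refine mem_shearerRegion_of_tangent_pos htv (le_add_of_nonneg_right hδ) ?_
  rw [add_sub_cancel_left]
  exact (mul_pos (sub_pos.2 hη) (htv _ subset_rfl)).trans_le
    (one_sub_mul_eval_le_tangent hG h0 ht v hδ h)

theorem one_sub_mul_eval_le_eval_add (hG : G.Connected) (h0 : 0 < t)
    (ht : t ∈ closure (shearerRegion G Set.univ)) (v : V) {δ η : ℝ} (hδ : 0 ≤ δ) (hη : η < 1)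
    (h : (Fintype.card V - 1) * δ ≤ η * t ^ (G.diam + 1)) :
    (1 - η) * (indPolyOn G (Set.univ \ {v})).eval t ≤
      (indPolyOn G (Set.univ \ {v})).eval (t + δ) := by
  have tangent := tangent_le_eval_indPolyOn
    (subset_closure (add_mem_shearerRegion_sdiff_singleton hG h0 ht v hδ hη h))
    (le_add_of_nonneg_right hδ)
  rw [add_sub_cancel_left] at tangent
  exact (one_sub_mul_eval_le_tangent hG h0 ht v hδ h).trans tangent

theorem mul_div_eval_add_le (hG : G.Connected) (h0 : 0 < t)
    (ht : t ∈ closure (shearerRegion G Set.univ)) (hroot : (indPolyOn G Set.univ).eval t = 0)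
    (v : V) {δ η : ℝ} (hδ : 0 ≤ δ) (hη : η < 1)
    (h : (Fintype.card V - 1) * δ ≤ η * t ^ (G.diam + 1)) :
    (t + δ) * ((indPolyOn G (Set.univ \ closedNeighborSet G v)).eval (t + δ) /
      (indPolyOn G (Set.univ \ {v})).eval (t + δ)) ≤ (1 + δ / t) / (1 - η) := by
  have mem := add_mem_shearerRegion_sdiff_singleton hG h0 ht v hδ hη h
  have lower := one_sub_mul_eval_le_eval_add hG h0 ht v hδ hη h
  have hle : t ≤ t + δ := le_add_of_nonneg_right hδ
  have anti : (indPolyOn G (Set.univ \ closedNeighborSet G v)).eval (t + δ) ≤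
      (indPolyOn G (Set.univ \ closedNeighborSet G v)).eval t :=
    antitoneOn_eval_indPolyOn (subset_closure mem) (sdiff_closedNeighborSet_subset G _ v)
      hle Set.self_mem_Iic hle
  have root_eq := eval_indPolyOn_eq_sub G (Set.mem_univ v) t
  rw [hroot, eq_comm, sub_eq_zero] at root_eq
  have pos := isLowerSet_shearerRegion G _ hle mem _ subset_rfl
  set g := (indPolyOn G (Set.univ \ closedNeighborSet G v)).eval t
  rw [root_eq] at lower pos
  have g_pos : 0 < g := pos_of_mul_pos_right pos h0.le
  have η_pos : 0 < 1 - η := sub_pos.2 hη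
  calc _ ≤ (t + δ) * (g / ((1 - η) * (t * g))) := by gcongr
    _ = (1 + δ / t) / (1 - η) := by field_simp

theorem norm_sub_re_le_of_root {A : Set V} {v : V} (hv : v ∈ A)
    (ht : t ∈ shearerRegion G (A \ {v})) {z : ℂ} (hz : ‖z‖ ≤ t)
    (hroot : aeval z (indPolyOn G A) = 0) :
    ‖z‖ - z.re ≤ t * ((indPolyOn G (A \ closedNeighborSet G v)).eval t /
      (indPolyOn G (A \ {v})).eval t) - 1 := by
  obtain ⟨ne_zero, bound⟩ := aeval_ne_zero_and_norm_div_sub_one_le ht hz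
  replace bound := bound _ (sdiff_closedNeighborSet_subset G A v)
  rw [aeval_indPolyOn_eq_sub G hv, sub_eq_zero] at hroot
  set g := aeval z (indPolyOn G (A \ closedNeighborSet G v)) / aeval z (indPolyOn G (A \ {v}))
    with hg
  set m := (indPolyOn G (A \ closedNeighborSet G v)).eval t / (indPolyOn G (A \ {v})).eval t
  have z_mul_g : z * g = 1 := by rw [hg, ← mul_div_assoc, ← hroot, div_self ne_zero]
  have m_nonneg : 0 ≤ m := by linarith [(norm_nonneg _).trans bound]
  have : 1 - z.re ≤ ‖z‖ * (m - 1) :=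
    calc 1 - z.re = (z * (g - 1)).re := by rw [mul_sub, z_mul_g]; simp
      _ ≤ ‖z‖ * ‖g - 1‖ := (Complex.re_le_norm _).trans (norm_mul_le _ _)
      _ ≤ ‖z‖ * (m - 1) := by gcongr
  have := mul_le_mul_of_nonneg_right hz m_nonneg
  linarith

theorem norm_sub_re_le_of_root_of_norm_le (hG : G.Connected) (h0 : 0 < t)
    (ht : t ∈ closure (shearerRegion G Set.univ)) (hroot : (indPolyOn G Set.univ).eval t = 0)
    {δ ε : ℝ} (hδ : 0 ≤ δ) (hε : ε < 1) (h : Fintype.card V * δ ≤ ε * t ^ (G.diam + 1))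
    {z : ℂ} (hz : ‖z‖ ≤ t + δ) (hz0 : aeval z (indPolyOn G Set.univ) = 0) :
    ‖z‖ - z.re ≤ (1 - ε)⁻¹ - 1 := by
  obtain ⟨v⟩ := hG.nonempty
  have h1 : t ≤ 1 := le_one_of_mem_closure_shearerRegion ⟨v, Set.mem_univ v⟩ ht
  have card_sub_one : (0 : ℝ) ≤ Fintype.card V - 1 :=
    sub_nonneg.2 (Nat.one_le_cast.2 (Fintype.card_pos_iff.2 ⟨v⟩))
  have pow_diam_pos : 0 < t ^ (G.diam + 1) := pow_pos h0 _
  set η := (Fintype.card V - 1) * δ / t ^ (G.diam + 1) with hη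
  have η_eq : (Fintype.card V - 1) * δ = η * t ^ (G.diam + 1) := by rw [hη]; field_simp
  have sum_le : η + δ / t ≤ ε :=
    calc η + δ / t ≤ η + δ / t ^ (G.diam + 1) := by
          gcongr
          exact pow_le_of_le_one h0.le h1 G.diam.succ_ne_zero
      _ = Fintype.card V * δ / t ^ (G.diam + 1) := by rw [hη]; ring
      _ ≤ ε := (div_le_iff₀ pow_diam_pos).2 h
  have η_nonneg : 0 ≤ η := by positivity
  have shift_nonneg : 0 ≤ δ / t := by positivity
  have η_lt_one : η < 1 := by linarith
  have mem := add_mem_shearerRegion_sdiff_singleton hG h0 ht v hδ η_lt_one η_eq.le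
  have ratio_le := (mul_div_eval_add_le hG h0 ht hroot v hδ η_lt_one η_eq.le).trans
    (one_add_div_one_sub_le_inv_one_sub shift_nonneg η_nonneg hε sum_le)
  exact (norm_sub_re_le_of_root (Set.mem_univ v) mem hz hz0).trans (sub_le_sub_right ratio_le 1)

end Connected

/-! ### Points of the disc -/

theorem cos_le_one_sub_mul_sq {t θ : ℝ} (h0 : 0 ≤ t) (h1 : t ≤ 1) (htθ : t ≤ θ)
    (hθt : θ ≤ 2 * Real.pi - t) : Real.cos θ ≤ 1 - 2 / 5 * t ^ 2 := by
  have cos_le : Real.cos θ ≤ Real.cos t := by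
    rcases le_total θ Real.pi with hθ | hθ
    · exact Real.cos_le_cos_of_nonneg_of_le_pi h0 hθ htθ
    · rw [← Real.cos_two_pi_sub θ]
      exact Real.cos_le_cos_of_nonneg_of_le_pi h0 (by linarith) (by linarith)
  have taylor := (abs_le.1 (Real.cos_bound (abs_le.2 ⟨by linarith, h1⟩))).2
  rw [abs_of_nonneg h0] at taylor
  have : t ^ 4 ≤ t ^ 2 := pow_le_pow_of_le_one h0 h1 (by norm_num)
  nlinarith [sq_nonneg t]

theorem norm_ofReal_mul_exp_ofReal_mul_I {β : ℝ} (hβ : 0 ≤ β) (θ : ℝ) :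
    ‖(β : ℂ) * Complex.exp (θ * Complex.I)‖ = β := by
  rw [norm_mul, Complex.norm_exp_ofReal_mul_I, mul_one, Complex.norm_of_nonneg hβ]

theorem lt_norm_sub_re_of_mem_ball {β θ δ : ℝ} (hβ : 0 ≤ β) {z : ℂ}
    (hz : z ∈ Metric.ball ((β : ℂ) * Complex.exp (θ * Complex.I)) δ) :
    β * (1 - Real.cos θ) - 2 * δ < ‖z‖ - z.re := by
  set c := (β : ℂ) * Complex.exp (θ * Complex.I) with hc
  have re_c : c.re = β * Real.cos θ := by
    rw [hc, Complex.re_ofReal_mul, Complex.exp_ofReal_mul_I_re]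
  rw [Metric.mem_ball, Complex.dist_eq] at hz
  have norm_sub := abs_le.1 ((abs_norm_sub_norm_le z c).trans hz.le)
  rw [norm_ofReal_mul_exp_ofReal_mul_I hβ] at norm_sub
  have re_sub := (Complex.re_le_norm (z - c)).trans_lt hz
  rw [Complex.sub_re] at re_sub
  linarith [norm_sub.1]

theorem inv_one_sub_sub_one_le {ε : ℝ} (h0 : 0 ≤ ε) (h : ε ≤ 1 / 6) :
    (1 - ε)⁻¹ - 1 ≤ 6 / 5 * ε := by
  rw [sub_le_iff_le_add, inv_le_iff_one_le_mul₀ (by linarith)]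
  nlinarith

theorem no_root_in_disc_away_from_beta_general {V : Type*} [Fintype V] (G : SimpleGraph V)
    (hG : G.Connected) (β : ℝ) (hroot : (indPoly G).eval β = 0)
    (hmin : ∀ x : ℝ, (indPoly G).eval x = 0 → β ≤ x) (τ : ℝ) (hτ : τ ∈ Set.Icc 0 1)
    (θ : ℝ) (hτθ : τ ≤ θ) (hθτ : θ ≤ 2 * Real.pi - τ) (z : ℂ)
    (hz : z ∈ Metric.ball ((β : ℂ) * Complex.exp (θ * Complex.I))
      (β ^ G.diam / (2 * Fintype.card V) * (β * τ) ^ 2 / 4)) :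
    aeval z (indPoly G) ≠ 0 := by
  intro hz0
  have := hG.nonempty
  obtain ⟨hβ, hβ1⟩ := root_mem_Ioc Set.univ_nonempty hroot hmin
  set δ := β ^ G.diam / (2 * Fintype.card V) * (β * τ) ^ 2 / 4 with hδ
  set ε := β * τ ^ 2 / 8 with hε
  have δ_nonneg : 0 ≤ δ := by positivity
  have ε_nonneg : 0 ≤ ε := by positivity
  have card_mul_δ : Fintype.card V * δ = ε * β ^ (G.diam + 1) := by rw [hδ, hε]; field_simp; ring
  have ε_le : ε ≤ 1 / 8 := by
    linarith [mul_le_one₀ hβ1 (sq_nonneg τ) (pow_le_one₀ hτ.1 hτ.2)]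
  have δ_le_ε : δ ≤ ε :=
    calc δ ≤ Fintype.card V * δ :=
          le_mul_of_one_le_left δ_nonneg (Nat.one_le_cast.2 Fintype.card_pos)
      _ = ε * β ^ (G.diam + 1) := card_mul_δ
      _ ≤ ε := mul_le_of_le_one_right ε_nonneg (pow_le_one₀ hβ.le hβ1)
  have norm_z : ‖z‖ ≤ β + δ := by
    simpa only [norm_ofReal_mul_exp_ofReal_mul_I hβ.le] using (norm_lt_of_mem_ball hz).le
  have upper : ‖z‖ - z.re ≤ (1 - ε)⁻¹ - 1 :=
    norm_sub_re_le_of_root_of_norm_le hG hβ (mem_closure_shearerRegion_of_forall_root_le hmin)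
      hroot δ_nonneg (by linarith) card_mul_δ.le norm_z hz0
  have lower := lt_norm_sub_re_of_mem_ball hβ.le hz
  have cos_le := mul_le_mul_of_nonneg_left (cos_le_one_sub_mul_sq hτ.1 hτ.2 hτθ hθτ) hβ.le
  linarith [inv_one_sub_sub_one_le ε_nonneg (by linarith)]

/-- Let `G` be connected on `n` vertices, `β := β(G)`,
`r_G := β^{dia(G)}/(2n)` and `θ_G := (β/(4n))^{dia(G)}`.  For every
`θ ∈ [θ_G, 2π − θ_G]`, the independence polynomial has no root in the open disc
`D(β e^{iθ}, r_G (β θ_G)² / 4)`. -/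
theorem no_root_in_disc_away_from_beta {V : Type*} [Fintype V]
    (G : SimpleGraph V) (hG : G.Connected)
    (β : ℝ) (hroot : (indPoly G).eval β = 0)
    (hmin : ∀ x : ℝ, (indPoly G).eval x = 0 → β ≤ x)
    (rG θG : ℝ) (hrG : rG = β ^ G.diam / (2 * Fintype.card V))
    (hθG : θG = (β / (4 * Fintype.card V)) ^ G.diam) :
    ∀ θ : ℝ, θG ≤ θ → θ ≤ 2 * Real.pi - θG →
      ∀ z ∈ Metric.ball ((β : ℂ) * Complex.exp (θ * Complex.I)) (rG * (β * θG) ^ 2 / 4),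
        aeval z (indPoly G) ≠ 0 := by
  have := hG.nonempty
  obtain ⟨hβ, hβ1⟩ := root_mem_Ioc Set.univ_nonempty hroot hmin
  have one_le_card : (1 : ℝ) ≤ Fintype.card V := Nat.one_le_cast.2 Fintype.card_pos
  have θG_mem : θG ∈ unitInterval :=
    hθG ▸ pow_mem (S := unitInterval.submonoid)
      (unitInterval.div_mem hβ.le (by positivity) (by linarith)) G.diam
  exact hrG ▸ no_root_in_disc_away_from_beta_general G hG β hroot hmin θG θG_mem
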